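/- Weak Young inequality: if 1 < p, q, r < ∞ satisfy 1 + 1/r = 1/p + 1/q, then there is a constant C = C(p,q) such that for all f ∈ L^{p,∞}(ℝ) and g ∈ L^{q,∞}(ℝ), the convolution f ∗ g belongs to L^{r,∞}(ℝ) with ‖f ∗ g‖_{r,∞} ≤ C ‖f‖_{p,∞} ‖g‖_{q,∞}. -/

import Mathlib

open MeasureTheory

/-- `WeakLpBound p f M` expresses that the weak Marcinkiewicz `L^{p,∞}(ℝ)` quantity
`sup { |E|^(-1+1/p) ∫_E |f| }` is bounded by `M`. -/
def WeakLpBound (p : ℝ) (f : ℝ → ℝ) (M : ℝ) : Prop :=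
  ∀ E : Set ℝ, MeasurableSet E → 0 < volume E → volume E < ⊤ →
    ∫ s in E, |f s| ≤ M * (volume E).toReal ^ (1 - 1/p)

/-!
For `f, g ≥ 0`, integrating `f ∗ g` over a set `E` gives `∫ Φ g`, where `Φ y = ∫_E f (x - y) dx`.
Testing the norm of `f` on translates of `E` gives `Φ ≤ ‖f‖_{p,∞} |E|^{1-1/p}`, and
Tonelli's theorem gives `‖Φ‖_{p,∞} ≤ ‖f‖_{p,∞} |E|`. The layer-cake formula for `Φ` with respect
to the measure `g dx`, whose value on `{Φ > t}` is at most `‖g‖_{q,∞} (‖Φ‖_{p,∞} / t) ^ θ` with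
`θ = p (1 - 1/q) = 1 - p/r < 1`, then leaves a power of `t` integrable up to `sup Φ`, whence the
constant `1 / (1 - θ) = r / p`.
-/

open Set
open scoped ENNReal

theorem one_sub_one_div_nonneg {p : ℝ} (hp : 1 ≤ p) : 0 ≤ 1 - 1 / p :=
  sub_nonneg.2 (div_le_one_of_le₀ hp (by linarith))

theorem mul_rpow_one_sub_mul_mul_rpow (A : ℝ≥0∞) {m : ℝ≥0∞} (hm0 : m ≠ 0) (hm : m ≠ ∞)
    {a θ : ℝ} (hθ0 : 0 ≤ θ) (hθ1 : θ ≤ 1) :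
    (A * m ^ a) ^ (1 - θ) * (A * m) ^ θ = A * m ^ (a * (1 - θ) + θ) := by
  have hθ1' : 0 ≤ 1 - θ := sub_nonneg.2 hθ1
  calc (A * m ^ a) ^ (1 - θ) * (A * m) ^ θ
      = A ^ (1 - θ) * A ^ θ * ((m ^ a) ^ (1 - θ) * m ^ θ) := by
        rw [ENNReal.mul_rpow_of_nonneg _ _ hθ0, ENNReal.mul_rpow_of_nonneg _ _ hθ1',
          mul_mul_mul_comm]
    _ = A * m ^ (a * (1 - θ) + θ) := by
        rw [← ENNReal.rpow_add_of_nonneg _ _ hθ1' hθ0, sub_add_cancel, ENNReal.rpow_one,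
          ← ENNReal.rpow_mul, ← ENNReal.rpow_add _ _ hm0 hm]

theorem setLIntegral_Ioo_ofReal_rpow {s T : ℝ} (hs : -1 < s) (hT : 0 ≤ T) :
    ∫⁻ t in Ioo 0 T, ENNReal.ofReal t ^ s =
      ENNReal.ofReal (1 / (s + 1)) * ENNReal.ofReal T ^ (s + 1) := by
  have hint : IntegrableOn (fun t : ℝ ↦ t ^ s) (Ioc 0 T) :=
    (intervalIntegrable_iff_integrableOn_Ioc_of_le hT).1
      (intervalIntegral.intervalIntegrable_rpow' hs)
  have hpos : ∀ᵐ t ∂volume.restrict (Ioc 0 T), 0 < t := by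
    filter_upwards [ae_restrict_mem measurableSet_Ioc] with t ht using ht.1
  calc ∫⁻ t in Ioo 0 T, ENNReal.ofReal t ^ s
      = ∫⁻ t in Ioc 0 T, ENNReal.ofReal (t ^ s) := by
        rw [setLIntegral_congr Ioo_ae_eq_Ioc]
        exact lintegral_congr_ae (hpos.mono fun t ht ↦ ENNReal.ofReal_rpow_of_pos ht)
    _ = ENNReal.ofReal (T ^ (s + 1) / (s + 1)) := by
        rw [← ofReal_integral_eq_lintegral_ofReal hint
            (hpos.mono fun t ht ↦ Real.rpow_nonneg ht.le s),
          ← intervalIntegral.integral_of_le hT, integral_rpow (.inl hs),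
          Real.zero_rpow (by linarith), sub_zero]
    _ = ENNReal.ofReal (1 / (s + 1)) * ENNReal.ofReal T ^ (s + 1) := by
        have hs' : 0 < s + 1 := by linarith
        rw [ENNReal.ofReal_rpow_of_nonneg hT hs'.le, ← ENNReal.ofReal_mul (by positivity),
          one_div_mul_eq_div]

section MarcinkiewiczNorm

variable {α β ε ε' : Type*} [MeasurableSpace α] [MeasurableSpace β] [ENorm ε] [ENorm ε']
  {μ : Measure α} {ν : Measure β} {p q : ℝ}

/-- The Marcinkiewicz norm `sup {μ(s)^(-1+1/p) ∫_s ‖f‖ : 0 < μ(s) < ∞}` of the weak Lebesgue space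
`L^{p,∞}(μ)`. It is an extended nonnegative real, defined for every function `f`, and `f` belongs
to the space when it is finite. -/
noncomputable def marcinkiewiczNorm (f : α → ε) (p : ℝ) (μ : Measure α) : ℝ≥0∞ :=
  ⨆ (s : Set α) (_ : MeasurableSet s) (_ : 0 < μ s) (_ : μ s < ∞),
    μ s ^ (-1 + 1 / p) * ∫⁻ x in s, ‖f x‖ₑ ∂μ

theorem marcinkiewiczNorm_le_iff {f : α → ε} {M : ℝ≥0∞} :
    marcinkiewiczNorm f p μ ≤ M ↔ ∀ s, MeasurableSet s → 0 < μ s → μ s < ∞ →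
      ∫⁻ x in s, ‖f x‖ₑ ∂μ ≤ M * μ s ^ (1 - 1 / p) := by
  simp only [marcinkiewiczNorm, iSup_le_iff]
  refine forall₄_congr fun s _ h0 hfin ↦ ?_
  rw [show -1 + 1 / p = -(1 - 1 / p) by ring, ENNReal.rpow_neg, mul_comm M,
    ENNReal.inv_mul_le_iff (ENNReal.rpow_pos h0 hfin.ne).ne'
      (ENNReal.rpow_ne_top_of_ne_zero h0.ne' hfin.ne)]

theorem marcinkiewiczNorm_mono {f : α → ε} {g : α → ε'} (h : ∀ x, ‖f x‖ₑ ≤ ‖g x‖ₑ) :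
    marcinkiewiczNorm f p μ ≤ marcinkiewiczNorm g p μ := by
  simp only [marcinkiewiczNorm]
  gcongr with s _ _ _ x
  exact h x

theorem marcinkiewiczNorm_enorm (f : α → ε) :
    marcinkiewiczNorm (fun x ↦ ‖f x‖ₑ) p μ = marcinkiewiczNorm f p μ := by
  simp only [marcinkiewiczNorm, enorm_enorm]

theorem setLIntegral_enorm_le_marcinkiewiczNorm_mul (f : α → ε) (p : ℝ) {s : Set α}
    (hs : μ s < ∞) :
    ∫⁻ x in s, ‖f x‖ₑ ∂μ ≤ marcinkiewiczNorm f p μ * μ s ^ (1 - 1 / p) := by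
  rcases eq_zero_or_pos (μ s) with h0 | h0
  · simp only [setLIntegral_measure_zero _ _ h0, zero_le]
  calc ∫⁻ x in s, ‖f x‖ₑ ∂μ ≤ ∫⁻ x in toMeasurable μ s, ‖f x‖ₑ ∂μ :=
        lintegral_mono_set (subset_toMeasurable μ s)
    _ ≤ marcinkiewiczNorm f p μ * μ (toMeasurable μ s) ^ (1 - 1 / p) :=
        marcinkiewiczNorm_le_iff.1 le_rfl _ (measurableSet_toMeasurable μ s)
          (by rwa [measure_toMeasurable]) (by rwa [measure_toMeasurable])
    _ = marcinkiewiczNorm f p μ * μ s ^ (1 - 1 / p) := by rw [measure_toMeasurable]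

theorem setLIntegral_enorm_le_marcinkiewiczNorm_mul_of_one_le [SigmaFinite μ] (hp : 1 ≤ p)
    (f : α → ε) (s : Set α) :
    ∫⁻ x in s, ‖f x‖ₑ ∂μ ≤ marcinkiewiczNorm f p μ * μ s ^ (1 - 1 / p) := by
  have hmono : Monotone fun n ↦ s ∩ spanningSets μ n :=
    fun _ _ hmn ↦ inter_subset_inter_right _ (monotone_spanningSets μ hmn)
  have hU : ⋃ n, s ∩ spanningSets μ n = s := by
    rw [← inter_iUnion, iUnion_spanningSets, inter_univ]
  rw [← hU, setLIntegral_iUnion_of_directed _ hmono.directed_le, hU]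
  refine iSup_le fun n ↦ ?_
  have hfin : μ (s ∩ spanningSets μ n) < ∞ :=
    (measure_mono inter_subset_right).trans_lt (measure_spanningSets_lt_top μ n)
  have hp' : 0 ≤ 1 - 1 / p := one_sub_one_div_nonneg hp
  grw [setLIntegral_enorm_le_marcinkiewiczNorm_mul f p hfin,
    measure_mono (μ := μ) (inter_subset_left : s ∩ spanningSets μ n ⊆ s)]

theorem marcinkiewiczNorm_comp_measurableEquiv_le {e : α ≃ᵐ β} (he : MeasurePreserving e μ ν)
    (f : β → ε) : marcinkiewiczNorm (f ∘ e) p μ ≤ marcinkiewiczNorm f p ν := by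
  refine marcinkiewiczNorm_le_iff.2 fun s _ _ hs ↦ ?_
  have hμ : ν (e '' s) = μ s := by
    rw [← he.measure_preimage_emb e.measurableEmbedding, preimage_image_eq _ e.injective]
  rw [← hμ]
  exact (he.setLIntegral_comp_emb e.measurableEmbedding (fun y ↦ ‖f y‖ₑ) s).trans_le
    (setLIntegral_enorm_le_marcinkiewiczNorm_mul f p (hμ ▸ hs))

theorem meas_ge_le_marcinkiewiczNorm_div_rpow [SigmaFinite μ] (hp : 0 < p) {f : α → ε}
    (hf : AEMeasurable (fun x ↦ ‖f x‖ₑ) μ) {t : ℝ≥0∞} (ht0 : t ≠ 0) (ht : t ≠ ∞) :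
    μ {x | t ≤ ‖f x‖ₑ} ≤ (marcinkiewiczNorm f p μ / t) ^ p := by
  rw [← Measure.iSup_restrict_spanningSets]
  refine iSup_le fun n ↦ ?_
  rw [Measure.restrict_apply' (measurableSet_spanningSets μ n)]
  set s := {x | t ≤ ‖f x‖ₑ} ∩ spanningSets μ n
  rcases eq_or_ne (μ s) 0 with h0 | h0
  · simp only [h0, zero_le]
  have hs : μ s < ∞ :=
    (measure_mono inter_subset_right).trans_lt (measure_spanningSets_lt_top μ n)
  have hmarkov : t * μ s ≤ marcinkiewiczNorm f p μ * μ s ^ (1 - 1 / p) :=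
    calc t * μ s = t * μ.restrict s {x | t ≤ ‖f x‖ₑ} := by
          rw [Measure.restrict_apply_superset inter_subset_left]
      _ ≤ ∫⁻ x in s, ‖f x‖ₑ ∂μ := mul_meas_ge_le_lintegral₀ hf.restrict t
      _ ≤ _ := setLIntegral_enorm_le_marcinkiewiczNorm_mul f p hs
  have hsplit : μ s = μ s ^ p⁻¹ * μ s ^ (1 - 1 / p) := by
    rw [← ENNReal.rpow_add _ _ h0 hs.ne, one_div, add_sub_cancel, ENNReal.rpow_one]
  have hmul : t * μ s ^ p⁻¹ * μ s ^ (1 - 1 / p) ≤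
      marcinkiewiczNorm f p μ * μ s ^ (1 - 1 / p) := by
    rwa [mul_assoc, ← hsplit]
  rw [← ENNReal.rpow_inv_le_iff hp, ENNReal.le_div_iff_mul_le (.inl ht0) (.inl ht), mul_comm]
  exact (ENNReal.mul_le_mul_iff_left (ENNReal.rpow_pos (pos_iff_ne_zero.2 h0) hs.ne).ne'
    (ENNReal.rpow_ne_top_of_ne_zero h0 hs.ne)).1 hmul

theorem lintegral_eq_setLIntegral_Ioo_meas_lt {F : α → ℝ≥0∞} (hF : AEMeasurable F μ)
    {T : ℝ≥0∞} (hT : T ≠ ∞) (hFT : ∀ᵐ x ∂μ, F x ≤ T) :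
    ∫⁻ x, F x ∂μ = ∫⁻ t in Ioo 0 T.toReal, μ {x | ENNReal.ofReal t < F x} := by
  have hF_eq : ∀ᵐ x ∂μ, F x = ENNReal.ofReal (F x).toReal :=
    hFT.mono fun x hx ↦ (ENNReal.ofReal_toReal (ne_top_of_le_ne_top hT hx)).symm
  have hmeas : ∀ t ∈ Ioi (0 : ℝ), μ {x | t < (F x).toReal} = (Ioo 0 T.toReal).indicator
      (fun t ↦ μ {x | ENNReal.ofReal t < F x}) t := by
    intro t ht
    by_cases htT : t < T.toReal
    · rw [indicator_of_mem (mem_Ioo.2 ⟨ht, htT⟩)]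
      refine measure_congr (hFT.mono fun x hx ↦ propext ?_)
      exact (ENNReal.ofReal_lt_iff_lt_toReal (le_of_lt ht) (ne_top_of_le_ne_top hT hx)).symm
    · rw [indicator_of_notMem fun h ↦ htT h.2]
      exact measure_eq_zero_iff_ae_notMem.2
        (hFT.mono fun x hx ↦ not_lt.2 ((ENNReal.toReal_mono hT hx).trans (not_lt.1 htT)))
  rw [lintegral_congr_ae hF_eq, lintegral_eq_lintegral_meas_lt μ
      (ae_of_all _ fun _ ↦ ENNReal.toReal_nonneg) hF.ennreal_toReal,
    setLIntegral_congr_fun measurableSet_Ioi hmeas, setLIntegral_indicator measurableSet_Ioo,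
    inter_eq_left.2 Ioo_subset_Ioi_self]

theorem withDensity_meas_lt_le_marcinkiewiczNorm [SigmaFinite μ] (hp : 0 < p) (hq : 1 ≤ q)
    {F : α → ℝ≥0∞} (hF : AEMeasurable F μ) (G : α → ℝ≥0∞) {t : ℝ≥0∞} (ht0 : t ≠ 0) (ht : t ≠ ∞) :
    μ.withDensity G {x | t < F x} ≤ marcinkiewiczNorm G q μ *
      marcinkiewiczNorm F p μ ^ (p * (1 - 1 / q)) * t ^ (-(p * (1 - 1 / q))) := by
  have hq' : 0 ≤ 1 - 1 / q := one_sub_one_div_nonneg hq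
  have hmeas : μ {x | t < F x} ≤ (marcinkiewiczNorm F p μ / t) ^ p :=
    (measure_mono fun x (hx : t < F x) ↦ hx.le).trans
      (meas_ge_le_marcinkiewiczNorm_div_rpow hp hF ht0 ht)
  calc μ.withDensity G {x | t < F x} = ∫⁻ x in {x | t < F x}, G x ∂μ := withDensity_apply' G _
    _ ≤ marcinkiewiczNorm G q μ * μ {x | t < F x} ^ (1 - 1 / q) :=
        setLIntegral_enorm_le_marcinkiewiczNorm_mul_of_one_le hq G _
    _ ≤ marcinkiewiczNorm G q μ * ((marcinkiewiczNorm F p μ / t) ^ p) ^ (1 - 1 / q) := by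
        gcongr
    _ = marcinkiewiczNorm G q μ * marcinkiewiczNorm F p μ ^ (p * (1 - 1 / q)) *
          t ^ (-(p * (1 - 1 / q))) := by
        rw [← ENNReal.rpow_mul, ENNReal.div_rpow_of_nonneg _ _ (mul_nonneg hp.le hq'),
          ENNReal.rpow_neg, mul_assoc, div_eq_mul_inv]

theorem lintegral_mul_le_marcinkiewiczNorm [SigmaFinite μ] (hp : 0 < p) (hq : 1 ≤ q)
    (hpq : p * (1 - 1 / q) < 1) {F G : α → ℝ≥0∞} (hF : AEMeasurable F μ) (hG : AEMeasurable G μ)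
    {T : ℝ≥0∞} (hT : T ≠ ∞) (hFT : ∀ᵐ x ∂μ, F x ≤ T) :
    ∫⁻ x, F x * G x ∂μ ≤ ENNReal.ofReal (1 / (1 - p * (1 - 1 / q))) *
      T ^ (1 - p * (1 - 1 / q)) * marcinkiewiczNorm F p μ ^ (p * (1 - 1 / q)) *
        marcinkiewiczNorm G q μ := by
  set θ := p * (1 - 1 / q)
  set K := marcinkiewiczNorm F p μ
  set B := marcinkiewiczNorm G q μ
  have hac : μ.withDensity G ≪ μ := withDensity_absolutelyContinuous μ G
  calc ∫⁻ x, F x * G x ∂μ = ∫⁻ x, F x ∂μ.withDensity G := by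
        simp only [lintegral_withDensity_eq_lintegral_mul₀ hG hF, Pi.mul_apply, mul_comm]
    _ = ∫⁻ t in Ioo 0 T.toReal, μ.withDensity G {x | ENNReal.ofReal t < F x} :=
        lintegral_eq_setLIntegral_Ioo_meas_lt (hF.mono_ac hac) hT (hac.ae_le hFT)
    _ ≤ ∫⁻ t in Ioo 0 T.toReal, B * K ^ θ * ENNReal.ofReal t ^ (-θ) :=
        setLIntegral_mono' measurableSet_Ioo fun t ht ↦
          withDensity_meas_lt_le_marcinkiewiczNorm hp hq hF G (ENNReal.ofReal_pos.2 ht.1).ne'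
            ENNReal.ofReal_ne_top
    _ = ENNReal.ofReal (1 / (1 - θ)) * T ^ (1 - θ) * K ^ θ * B := by
        rw [lintegral_const_mul _ (by fun_prop),
          setLIntegral_Ioo_ofReal_rpow (by linarith) ENNReal.toReal_nonneg,
          ENNReal.ofReal_toReal hT, neg_add_eq_sub]
        ring

end MarcinkiewiczNorm

section Convolution

variable {G : Type*} [AddGroup G] [MeasurableSpace G] [MeasurableAdd₂ G] {μ : Measure G}
  [μ.IsAddRightInvariant] {p q r : ℝ}

theorem setLIntegral_comp_sub_right_le_marcinkiewiczNorm (F : G → ℝ≥0∞) (p : ℝ) (y : G)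
    {s : Set G} (hs : μ s < ∞) :
    ∫⁻ x in s, F (x - y) ∂μ ≤ marcinkiewiczNorm F p μ * μ s ^ (1 - 1 / p) := by
  grw [← marcinkiewiczNorm_comp_measurableEquiv_le (e := MeasurableEquiv.subRight y)
    (measurePreserving_sub_right μ y) F]
  exact setLIntegral_enorm_le_marcinkiewiczNorm_mul _ p hs

variable [MeasurableNeg G]

theorem aemeasurable_sub_restrict_prod [SigmaFinite μ] {F : G → ℝ≥0∞} (hF : AEMeasurable F μ)
    (s t : Set G) :
    AEMeasurable (fun z : G × G ↦ F (z.1 - z.2)) ((μ.restrict s).prod (μ.restrict t)) :=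
  (hF.comp_quasiMeasurePreserving (quasiMeasurePreserving_sub_of_right_invariant μ μ)).mono_ac
    (Measure.restrict_le_self.absolutelyContinuous.prod
      Measure.restrict_le_self.absolutelyContinuous)

theorem setLIntegral_lintegral_sub_mul [SigmaFinite μ] {F H : G → ℝ≥0∞} (hF : AEMeasurable F μ)
    (hH : AEMeasurable H μ) (s : Set G) :
    ∫⁻ x in s, ∫⁻ y, F (x - y) * H y ∂μ ∂μ = ∫⁻ y, (∫⁻ x in s, F (x - y) ∂μ) * H y ∂μ := by
  have hF' : AEMeasurable (fun z : G × G ↦ F (z.1 - z.2)) ((μ.restrict s).prod μ) := by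
    simpa only [Measure.restrict_univ] using aemeasurable_sub_restrict_prod hF s univ
  rw [lintegral_lintegral_swap (hF'.mul hH.comp_snd)]
  exact lintegral_congr fun y ↦ lintegral_mul_const'' _ <|
    (hF.comp_quasiMeasurePreserving
      (measurePreserving_sub_right μ y).quasiMeasurePreserving).restrict

variable [μ.IsNegInvariant]

theorem setLIntegral_comp_sub_left_le_marcinkiewiczNorm (F : G → ℝ≥0∞) (p : ℝ) (x : G)
    {s : Set G} (hs : μ s < ∞) :
    ∫⁻ y in s, F (x - y) ∂μ ≤ marcinkiewiczNorm F p μ * μ s ^ (1 - 1 / p) := by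
  have hx : MeasurePreserving (MeasurableEquiv.subLeft x) μ μ := by
    convert (Measure.measurePreserving_neg μ).comp (measurePreserving_sub_right μ x) using 1
    ext y
    exact (neg_sub y x).symm
  grw [← marcinkiewiczNorm_comp_measurableEquiv_le hx F]
  exact setLIntegral_enorm_le_marcinkiewiczNorm_mul _ p hs

variable [SigmaFinite μ]

theorem marcinkiewiczNorm_setLIntegral_sub_le {F : G → ℝ≥0∞} (hF : AEMeasurable F μ) (p : ℝ)
    (s : Set G) :
    marcinkiewiczNorm (fun y ↦ ∫⁻ x in s, F (x - y) ∂μ) p μ ≤ marcinkiewiczNorm F p μ * μ s := by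
  refine marcinkiewiczNorm_le_iff.2 fun t _ _ ht ↦ ?_
  calc ∫⁻ y in t, ∫⁻ x in s, F (x - y) ∂μ ∂μ = ∫⁻ x in s, ∫⁻ y in t, F (x - y) ∂μ ∂μ :=
        (lintegral_lintegral_swap (aemeasurable_sub_restrict_prod hF s t)).symm
    _ ≤ ∫⁻ _ in s, marcinkiewiczNorm F p μ * μ t ^ (1 - 1 / p) ∂μ :=
        lintegral_mono fun x ↦ setLIntegral_comp_sub_left_le_marcinkiewiczNorm F p x ht
    _ = marcinkiewiczNorm F p μ * μ s * μ t ^ (1 - 1 / p) := by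
        rw [setLIntegral_const, mul_right_comm]

theorem setLIntegral_lintegral_sub_mul_le (hp : 0 < p) (hq : 1 ≤ q) (hr : 0 < r)
    (hpqr : 1 + 1 / r = 1 / p + 1 / q) {F H : G → ℝ≥0∞} (hF : AEMeasurable F μ)
    (hH : AEMeasurable H μ) (hF_top : marcinkiewiczNorm F p μ ≠ ∞) {s : Set G} (hs0 : 0 < μ s)
    (hs : μ s < ∞) :
    ∫⁻ x in s, ∫⁻ y, F (x - y) * H y ∂μ ∂μ ≤ ENNReal.ofReal (r / p) *
      marcinkiewiczNorm F p μ * marcinkiewiczNorm H q μ * μ s ^ (1 - 1 / r) := by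
  set A := marcinkiewiczNorm F p μ
  set B := marcinkiewiczNorm H q μ
  set θ := p * (1 - 1 / q) with hθ_def
  have hθ : 0 ≤ θ := mul_nonneg hp.le (one_sub_one_div_nonneg hq)
  have hθr : 1 - θ = p / r := by
    rw [hθ_def, show 1 - 1 / q = 1 / p - 1 / r by linarith]
    field_simp
    ring
  have hθ1 : 0 < 1 - θ := hθr ▸ div_pos hp hr
  have hexp : (1 - 1 / p) * (1 - θ) + θ = 1 - 1 / r := by
    rw [← sub_sub_cancel 1 θ, hθr]
    field_simp
    ring
  have hΦ : AEMeasurable (fun y ↦ ∫⁻ x in s, F (x - y) ∂μ) μ := by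
    simpa only [Measure.restrict_univ] using
      (aemeasurable_sub_restrict_prod hF s univ).lintegral_prod_left'
  have hT : A * μ s ^ (1 - 1 / p) ≠ ∞ :=
    ENNReal.mul_ne_top hF_top (ENNReal.rpow_ne_top_of_ne_zero hs0.ne' hs.ne)
  calc ∫⁻ x in s, ∫⁻ y, F (x - y) * H y ∂μ ∂μ
      = ∫⁻ y, (∫⁻ x in s, F (x - y) ∂μ) * H y ∂μ := setLIntegral_lintegral_sub_mul hF hH s
    _ ≤ ENNReal.ofReal (1 / (1 - θ)) * (A * μ s ^ (1 - 1 / p)) ^ (1 - θ) *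
          marcinkiewiczNorm (fun y ↦ ∫⁻ x in s, F (x - y) ∂μ) p μ ^ θ * B :=
        lintegral_mul_le_marcinkiewiczNorm hp hq (sub_pos.1 hθ1) hΦ hH hT
          (ae_of_all _ fun y ↦ setLIntegral_comp_sub_right_le_marcinkiewiczNorm F p y hs)
    _ ≤ ENNReal.ofReal (1 / (1 - θ)) * (A * μ s ^ (1 - 1 / p)) ^ (1 - θ) * (A * μ s) ^ θ * B := by
        grw [marcinkiewiczNorm_setLIntegral_sub_le hF p s]
    _ = ENNReal.ofReal (r / p) * A * B * μ s ^ (1 - 1 / r) := by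
        rw [mul_assoc (ENNReal.ofReal _),
          mul_rpow_one_sub_mul_mul_rpow _ hs0.ne' hs.ne hθ (sub_nonneg.1 hθ1.le), hexp, hθr,
          one_div_div]
        ring

theorem marcinkiewiczNorm_lintegral_sub_mul_le (hp : 0 < p) (hq : 1 ≤ q) (hr : 0 < r)
    (hpqr : 1 + 1 / r = 1 / p + 1 / q) {F H : G → ℝ≥0∞} (hF : AEMeasurable F μ)
    (hH : AEMeasurable H μ) :
    marcinkiewiczNorm (fun x ↦ ∫⁻ y, F (x - y) * H y ∂μ) r μ ≤
      ENNReal.ofReal (r / p) * marcinkiewiczNorm F p μ * marcinkiewiczNorm H q μ := by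
  refine marcinkiewiczNorm_le_iff.2 fun s _ hs0 hs ↦ ?_
  rcases ne_or_eq (marcinkiewiczNorm F p μ) ∞ with hF_top | hF_top
  · exact setLIntegral_lintegral_sub_mul_le hp hq hr hpqr hF hH hF_top hs0 hs
  rcases eq_or_ne (marcinkiewiczNorm H q μ) 0 with hH0 | hH0
  · have hH_ae : H =ᵐ[μ] 0 := by
      rw [← lintegral_eq_zero_iff' hH, ← nonpos_iff_eq_zero]
      simpa [hH0] using
        setLIntegral_enorm_le_marcinkiewiczNorm_mul_of_one_le (μ := μ) hq H univ
    have hconv (x : G) : ∫⁻ y, F (x - y) * H y ∂μ = 0 :=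
      lintegral_eq_zero_of_ae_eq_zero (hH_ae.mono fun y hy ↦ by simp [hy])
    simp [hconv]
  · have hC : ENNReal.ofReal (r / p) ≠ 0 := (ENNReal.ofReal_pos.2 (div_pos hr hp)).ne'
    rw [hF_top, ENNReal.mul_top hC, ENNReal.top_mul hH0,
      ENNReal.top_mul (ENNReal.rpow_pos hs0 hs.ne).ne']
    exact le_top

end Convolution

theorem weak_young_inequality_general {G A : Type*} [AddGroup G] [MeasurableSpace G]
    [MeasurableAdd₂ G] [MeasurableNeg G] {μ : Measure G} [μ.IsAddRightInvariant]
    [μ.IsNegInvariant] [SigmaFinite μ] [NonUnitalNormedRing A] [NormedSpace ℝ A] {p q r : ℝ}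
    (hp : 0 < p) (hq : 1 ≤ q) (hr : 0 < r) (hpqr : 1 + 1 / r = 1 / p + 1 / q) {f g : G → A}
    (hf : AEStronglyMeasurable f μ) (hg : AEStronglyMeasurable g μ) :
    marcinkiewiczNorm (fun x ↦ ∫ y, f (x - y) * g y ∂μ) r μ ≤
      ENNReal.ofReal (r / p) * marcinkiewiczNorm f p μ * marcinkiewiczNorm g q μ := by
  have hconv (x : G) : ‖∫ y, f (x - y) * g y ∂μ‖ₑ ≤ ∫⁻ y, ‖f (x - y)‖ₑ * ‖g y‖ₑ ∂μ :=
    (enorm_integral_le_lintegral_enorm _).trans <| lintegral_mono fun y ↦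
      ENNReal.coe_le_coe.2 (nnnorm_mul_le (f (x - y)) (g y))
  rw [← marcinkiewiczNorm_enorm f, ← marcinkiewiczNorm_enorm g]
  exact (marcinkiewiczNorm_mono hconv).trans
    (marcinkiewiczNorm_lintegral_sub_mul_le hp hq hr hpqr hf.enorm hg.enorm)

namespace WeakLpBound

variable {p M : ℝ} {f : ℝ → ℝ}

theorem nonneg (h : WeakLpBound p f M) : 0 ≤ M := by
  have h01 : ∫ x in Icc (0 : ℝ) 1, |f x| ≤ M := by
    simpa using h (Icc 0 1) measurableSet_Icc (by simp) (by simp)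
  exact (integral_nonneg fun x ↦ abs_nonneg (f x)).trans h01

theorem setLIntegral_enorm_le (h : WeakLpBound p f M) {s : Set ℝ}
    (hs : MeasurableSet s) (hs_top : volume s < ∞) (hf : IntegrableOn f s) :
    ∫⁻ x in s, ‖f x‖ₑ ≤ ENNReal.ofReal M * volume s ^ (1 - 1 / p) := by
  rcases eq_or_ne (volume s) 0 with h0 | h0
  · simp only [setLIntegral_measure_zero _ _ h0, zero_le]
  calc ∫⁻ x in s, ‖f x‖ₑ = ENNReal.ofReal (∫ x in s, |f x|) :=
        (ofReal_integral_norm_eq_lintegral_enorm hf).symm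
    _ ≤ ENNReal.ofReal (M * (volume s).toReal ^ (1 - 1 / p)) :=
        ENNReal.ofReal_le_ofReal (h s hs (pos_iff_ne_zero.2 h0) hs_top)
    _ = ENNReal.ofReal M * volume s ^ (1 - 1 / p) := by
        rw [ENNReal.ofReal_mul h.nonneg, ENNReal.toReal_rpow,
          ENNReal.ofReal_toReal (ENNReal.rpow_ne_top_of_ne_zero h0 hs_top.ne)]

/-- The Bochner integral in `WeakLpBound` is `0` on sets where `f` is not integrable, so the bound
is first used on the sets where `|f| ≤ n`. -/
theorem marcinkiewiczNorm_le (h : WeakLpBound p f M) (hp : 1 ≤ p) (hf : Measurable f) :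
    marcinkiewiczNorm f p volume ≤ ENNReal.ofReal M := by
  refine marcinkiewiczNorm_le_iff.2 fun s hs _ hs_top ↦ ?_
  have hmono : Monotone fun n : ℕ ↦ s ∩ {x | ‖f x‖ ≤ n} := fun m n hmn x hx ↦
    ⟨hx.1, le_trans (mem_ofPred.1 hx.2) (Nat.cast_le.2 hmn)⟩
  have hU : ⋃ n : ℕ, s ∩ {x | ‖f x‖ ≤ n} = s := by
    rw [← inter_iUnion, inter_eq_left]
    exact fun x _ ↦ mem_iUnion.2 (exists_nat_ge ‖f x‖)
  rw [← hU, setLIntegral_iUnion_of_directed _ hmono.directed_le, hU]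
  refine iSup_le fun n ↦ ?_
  have hsn : MeasurableSet (s ∩ {x | ‖f x‖ ≤ n}) :=
    hs.inter (measurableSet_le hf.norm measurable_const)
  have hsn_top : volume (s ∩ {x | ‖f x‖ ≤ n}) < ∞ := measure_inter_lt_top_of_left_ne_top hs_top.ne
  have hint : IntegrableOn f (s ∩ {x | ‖f x‖ ≤ n}) :=
    .of_bound hsn_top hf.aestronglyMeasurable n ((ae_restrict_mem hsn).mono fun _ hx ↦ hx.2)
  have hp' : 0 ≤ 1 - 1 / p := one_sub_one_div_nonneg hp
  grw [h.setLIntegral_enorm_le hsn hsn_top hint, inter_subset_left]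

theorem of_marcinkiewiczNorm_le (hM : 0 ≤ M)
    (h : marcinkiewiczNorm f p volume ≤ ENNReal.ofReal M) : WeakLpBound p f M := by
  intro s hs h0 hs_top
  have hle : ∫⁻ x in s, ‖f x‖ₑ ≤ ENNReal.ofReal (M * (volume s).toReal ^ (1 - 1 / p)) := by
    rw [ENNReal.ofReal_mul hM, ENNReal.toReal_rpow,
      ENNReal.ofReal_toReal (ENNReal.rpow_ne_top_of_ne_zero h0.ne' hs_top.ne)]
    exact marcinkiewiczNorm_le_iff.1 h s hs h0 hs_top
  calc ∫ x in s, |f x| ≤ (∫⁻ x in s, ‖f x‖ₑ).toReal := by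
        simpa [ofReal_norm, ← Real.norm_eq_abs] using
          (Real.le_norm_self _).trans (norm_integral_le_lintegral_norm fun x ↦ |f x|)
    _ ≤ M * (volume s).toReal ^ (1 - 1 / p) := ENNReal.toReal_le_of_le_ofReal (by positivity) hle

theorem convolution {q r N : ℝ} {g : ℝ → ℝ} (hMf : WeakLpBound p f M) (hNg : WeakLpBound q g N)
    (hp : 1 ≤ p) (hq : 1 ≤ q) (hr : 0 < r) (hpqr : 1 + 1 / r = 1 / p + 1 / q) (hf : Measurable f)
    (hg : Measurable g) :
    WeakLpBound r (fun x ↦ ∫ y, f (x - y) * g y) (r / p * M * N) := by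
  have hp0 : 0 < p := zero_lt_one.trans_le hp
  have hM0 := hMf.nonneg
  have hN0 := hNg.nonneg
  refine .of_marcinkiewiczNorm_le (by positivity) ?_
  grw [weak_young_inequality_general hp0 hq hr hpqr hf.aestronglyMeasurable
      hg.aestronglyMeasurable, hMf.marcinkiewiczNorm_le hp hf,
    hNg.marcinkiewiczNorm_le hq hg, ← ENNReal.ofReal_mul (by positivity),
    ← ENNReal.ofReal_mul (by positivity)]

end WeakLpBound

/-- Weak Young inequality: if `1 + 1/r = 1/p + 1/q` with `1 < p, q, r < ∞`,
then the convolution of `f ∈ L^{p,∞}(ℝ)` and `g ∈ L^{q,∞}(ℝ)` lies in `L^{r,∞}(ℝ)`,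
with `‖f ∗ g‖_{r,∞} ≤ C(p,q) ‖f‖_{p,∞} ‖g‖_{q,∞}`. -/
theorem weak_young_inequality (p q r : ℝ) (hp : 1 < p) (hq : 1 < q) (hr : 1 < r)
    (hpqr : 1 + 1/r = 1/p + 1/q) :
    ∃ C : ℝ, 0 < C ∧ ∀ f g : ℝ → ℝ, Measurable f → Measurable g →
      ∀ Mf Mg : ℝ, WeakLpBound p f Mf → WeakLpBound q g Mg →
        WeakLpBound r (fun x => ∫ y : ℝ, f (x - y) * g y) (C * Mf * Mg) := by
  exact ⟨r / p, by positivity, fun f g hf hg Mf Mg hMf hMg ↦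
    hMf.convolution hMg hp.le hq.le (by positivity) hpqr hf hg⟩
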